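/- Define L₁(x,y) = J₁(x,y)·J₁(y,x) − (∂J₁/∂y)(x,y)·(∫_x^y J₁(u,x) du − (1/2)·sign(y − x)), where ∂J₁/∂y denotes the derivative of J₁ in its second variable. Then for each x ∈ ℝ there is C > 0 such that |L₁(x,y)| ≤ C·(|y|^{−3/2} + |y|^{−1/4}) and |L₁(y,x)| ≤ C·(|y|^{−3/2} + |y|^{−1/4}) for all y with |y| ≥ |x| + 1. -/

import Mathlib

open MeasureTheory Filter Set

noncomputable section

/-- The Airy function `Ai(x) = (1/π)·lim_{b→∞} ∫_0^b cos(t³/3 + x·t) dt`. -/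
def Ai (x : ℝ) : ℝ :=
  (1 / Real.pi) *
    limUnder Filter.atTop (fun b : ℝ => ∫ t in (0:ℝ)..b, Real.cos (t ^ 3 / 3 + x * t))

/-- The Airy kernel. -/
def KAi (x y : ℝ) : ℝ :=
  if x = y then (deriv Ai x) ^ 2 - x * (Ai x) ^ 2
  else (Ai x * deriv Ai y - deriv Ai x * Ai y) / (x - y)

/-- One-point correlation function of the Airy₂ random point field. -/
def rho (x : ℝ) : ℝ := (deriv Ai x) ^ 2 - x * (Ai x) ^ 2

/-- Probabilists' Hermite polynomial `Ĥ_m(x) = (−1)^m e^{x²/2} (d/dx)^m e^{−x²/2}`. -/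
def hermiteP (m : ℕ) (x : ℝ) : ℝ :=
  (-1 : ℝ) ^ m * Real.exp (x ^ 2 / 2) * iteratedDeriv m (fun t => Real.exp (-t ^ 2 / 2)) x

/-- Normalized oscillator function `φ_m`. -/
def osc (m : ℕ) (x : ℝ) : ℝ :=
  (2 * Real.pi) ^ (-(1:ℝ)/4) * ((m.factorial : ℝ)) ^ (-(1:ℝ)/2) *
    Real.exp (-x ^ 2 / 4) * hermiteP m x

/-- `ψ_mⁿ(x) = n^{1/12}·φ_m(2√n + n^{−1/6}·x)`. -/
def psiUp (n m : ℕ) (x : ℝ) : ℝ :=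
  (n : ℝ) ^ ((1:ℝ)/12) * osc m (2 * Real.sqrt n + (n : ℝ) ^ (-(1:ℝ)/6) * x)

/-- `ψ_n = ψ_nⁿ`. -/
def psiN (n : ℕ) : ℝ → ℝ := psiUp n n

/-- The finite-`n` Airy kernel. -/
def KAiN (n : ℕ) (x y : ℝ) : ℝ :=
  if x = y then
    (deriv (psiN n) x) ^ 2 - psiN n x * deriv (deriv (psiN n)) x
      - (1 / (2 * (n : ℝ) ^ ((1:ℝ)/3))) * (psiN n x) ^ 2
  else
    (psiN n x * deriv (psiN n) y - deriv (psiN n) x * psiN n y) / (x - y)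
      - (1 / (2 * (n : ℝ) ^ ((1:ℝ)/3))) * (psiN n x * psiN n y)

/-- `(εf)(x) = (1/2)·∫_ℝ sign(x − y)·f(y) dy`. -/
def epsF (f : ℝ → ℝ) (x : ℝ) : ℝ := (1/2) * ∫ y : ℝ, Real.sign (x - y) * f y

/-- `εψ_n`. -/
def epsPsi (n : ℕ) : ℝ → ℝ := epsF (psiN n)

/-- `J₁(x,y) = K_Ai(x,y) + (1/2)·Ai(x)·(1 − ∫_y^∞ Ai(u) du)`. -/
def J1 (x y : ℝ) : ℝ := KAi x y + (1/2) * Ai x * (1 - ∫ u in Set.Ioi y, Ai u)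

/-- Scalar part of the quaternion product of Airy₁ kernels. -/
def L1 (x y : ℝ) : ℝ :=
  J1 x y * J1 y x -
    deriv (fun v => J1 x v) y * ((∫ u in x..y, J1 u x) - (1/2) * Real.sign (y - x))

/-- `J₁ⁿ(x,y) = K_Aiⁿ(x,y) + (1/2)·ψ_{n−1}ⁿ(x)·(εψ_n)(y)`. -/
def J1N (n : ℕ) (x y : ℝ) : ℝ :=
  KAiN n x y + (1/2) * psiUp n (n - 1) x * epsPsi n y

/-- Scalar part of the quaternion product of finite-`n` Airy₁ kernels. -/
def L1N (n : ℕ) (x y : ℝ) : ℝ :=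
  J1N n x y * J1N n y x -
    deriv (fun v => J1N n x v) y * ((∫ u in x..y, J1N n u x) - (1/2) * Real.sign (y - x))

/-- `ρ̂(x) = (1/π)·√(−x)` for `x < 0`, and `0` otherwise. -/
def rhoHat (x : ℝ) : ℝ := if x < 0 then Real.sqrt (-x) / Real.pi else 0

/-- `ρ̂ⁿ(x) = (1/π)·√(−x·(1 + x/(4·n^{2/3})))` on `(−4n^{2/3}, 0)`, and `0` otherwise. -/
def rhoHatN (n : ℕ) (x : ℝ) : ℝ :=
  if -(4 * (n : ℝ) ^ ((2:ℝ)/3)) < x ∧ x < 0 then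
    Real.sqrt (-x * (1 + x / (4 * (n : ℝ) ^ ((2:ℝ)/3)))) / Real.pi
  else 0

/-- `G_{a,b,c}(x,y) = |x|^{−a}·|y|^{−b}·|x−y|^{−c}`. -/
def Gf (a b c : ℝ) (x y : ℝ) : ℝ := |x| ^ (-a) * |y| ^ (-b) * |x - y| ^ (-c)

/-- `Ĝ_{a,b,c}(x,y) = G_{a,b,c}(x,y) + G_{a,b,c}(y,x)`. -/
def Ghat (a b c : ℝ) (x y : ℝ) : ℝ := Gf a b c x y + Gf a b c y x

/-- Soft-edge one-point correlation function of the `n`-point GUE ensemble. -/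
def rhoN (n : ℕ) (x : ℝ) : ℝ :=
  (deriv (psiN n) x) ^ 2 - (x ^ 2 / (4 * (n : ℝ) ^ ((2:ℝ)/3)) + x) * (psiN n x) ^ 2

end


namespace AiryAux
open Complex Topology

/-- The complex Airy integrand. -/
noncomputable def ph (x : ℝ) (z : ℂ) : ℂ := cexp (I * (z ^ 3 / 3 + x * z))

/-- Integrand on the shifted contour with `k` derivatives. -/
noncomputable def Fk (k : ℕ) (x t : ℝ) : ℂ := (I * ((t : ℂ) + I)) ^ k * ph x ((t : ℂ) + I)

noncomputable def A (k : ℕ) (x : ℝ) : ℂ := ∫ t in Ioi (0:ℝ), Fk k x t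

lemma norm_ph (x t s : ℝ) :
    ‖ph x ((t : ℂ) + s * I)‖ = Real.exp (-(t ^ 2 * s) + s ^ 3 / 3 - x * s) := by
  unfold ph
  rw [Complex.norm_exp]
  congr 1
  have : I * (((t : ℂ) + s * I) ^ 3 / 3 + x * ((t : ℂ) + s * I)) =
      ((-(t ^ 2 * s) + s ^ 3 / 3 - x * s : ℝ) : ℂ) + ((t ^ 3 / 3 - t * s ^ 2 + x * t : ℝ) : ℂ) * I := by
    push_cast
    linear_combination (t ^ 2 * s + I * t * s ^ 2 + (I ^ 2 - 1) * s ^ 3 / 3 + x * s) * Complex.I_sq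
  rw [this, Complex.add_re, Complex.ofReal_re, Complex.re_ofReal_mul, Complex.I_re, mul_zero, add_zero]

lemma norm_ph' (x t : ℝ) : ‖ph x ((t : ℂ) + I)‖ = Real.exp (-t ^ 2 + 1 / 3 - x) := by
  have := norm_ph x t 1
  simp only [ofReal_one, one_mul, mul_one, one_pow] at this
  exact this

lemma norm_Fk_le (k : ℕ) (x t : ℝ) (ht : 0 ≤ t) :
    ‖Fk k x t‖ ≤ (k.factorial * Real.exp (7 / 3 - x)) * Real.exp (-t) := by
  unfold Fk
  rw [norm_mul, norm_ph', norm_pow, norm_mul, Complex.norm_I, one_mul]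
  have h1 : ‖(t : ℂ) + I‖ ≤ t + 1 := by
    refine (norm_add_le _ _).trans ?_
    simp [abs_of_nonneg ht]
  have h2 : ‖(t : ℂ) + I‖ ^ k ≤ (t + 1) ^ k := by gcongr
  have h3 := Real.pow_div_factorial_le_exp (x := t + 1) (by linarith) k
  have hk : (0:ℝ) < k.factorial := by exact_mod_cast k.factorial_pos
  rw [div_le_iff₀ hk] at h3
  calc ‖(t : ℂ) + I‖ ^ k * Real.exp (-t ^ 2 + 1 / 3 - x)
      ≤ (Real.exp (t + 1) * k.factorial) * Real.exp (-t ^ 2 + 1 / 3 - x) := by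
        gcongr; exact h2.trans h3
    _ = k.factorial * Real.exp ((t + 1) + (-t ^ 2 + 1 / 3 - x)) := by
        rw [Real.exp_add (t + 1)]; ring
    _ ≤ k.factorial * Real.exp ((7 / 3 - x) + -t) := by
        gcongr ?_ * Real.exp ?_; nlinarith [sq_nonneg (t - 1)]
    _ = _ := by rw [Real.exp_add]; ring

lemma cont_Fk (k : ℕ) (x : ℝ) : Continuous (Fk k x) := by
  unfold Fk ph
  fun_prop

lemma int_bound (c : ℝ) : IntegrableOn (fun t : ℝ => c * Real.exp (-t)) (Ioi 0) :=
  (integrableOn_exp_neg_Ioi 0).const_mul c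

lemma int_Fk (k : ℕ) (x : ℝ) : IntegrableOn (Fk k x) (Ioi 0) := by
  refine Integrable.mono' (int_bound (k.factorial * Real.exp (7 / 3 - x)))
    (cont_Fk k x).aestronglyMeasurable ?_
  filter_upwards [ae_restrict_mem measurableSet_Ioi] with t ht
  exact norm_Fk_le k x t (le_of_lt ht)

lemma norm_A_le (k : ℕ) (x : ℝ) : ‖A k x‖ ≤ k.factorial * Real.exp (7 / 3 - x) := by
  unfold A
  have := norm_integral_le_of_norm_le (int_bound (k.factorial * Real.exp (7 / 3 - x)))
    (f := Fk k x) (by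
      filter_upwards [ae_restrict_mem measurableSet_Ioi] with t ht
      exact norm_Fk_le k x t (le_of_lt ht))
  refine this.trans (le_of_eq ?_)
  rw [integral_const_mul, integral_exp_neg_Ioi_zero, mul_one]

lemma deriv_Fk (k : ℕ) (x t : ℝ) : HasDerivAt (fun x => Fk k x t) (Fk (k + 1) x t) x := by
  unfold Fk ph
  have h : HasDerivAt (fun x : ℝ => (x : ℂ)) 1 x := Complex.ofRealCLM.hasDerivAt
  have := (((h.mul_const ((t : ℂ) + I)).const_add (((t : ℂ) + I) ^ 3 / 3)).const_mul I).cexp.const_mul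
    ((I * ((t : ℂ) + I)) ^ k)
  refine this.congr_deriv ?_
  rw [pow_succ]; ring

lemma deriv_A (k : ℕ) (x : ℝ) : HasDerivAt (A k) (A (k + 1) x) x := by
  refine (hasDerivAt_integral_of_dominated_loc_of_deriv_le (μ := volume.restrict (Ioi 0))
    (F := Fk k) (F' := Fk (k + 1)) (s := Ioi (x - 1))
    (bound := fun t => ((k + 1).factorial * Real.exp (7 / 3 - (x - 1))) * Real.exp (-t))
    (Ioi_mem_nhds (by linarith)) ?_ (int_Fk k x) (cont_Fk _ x).aestronglyMeasurable ?_
    (int_bound _) ?_).2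
  · exact Eventually.of_forall fun y => (cont_Fk k y).aestronglyMeasurable
  · filter_upwards [ae_restrict_mem measurableSet_Ioi] with t ht y hy
    refine (norm_Fk_le (k + 1) y t (le_of_lt ht)).trans ?_
    have : x - 1 < y := hy
    gcongr
  · exact Eventually.of_forall fun t y _ => deriv_Fk k y t

/-- The contour shift. -/
lemma contour (x b : ℝ) :
    (∫ t in (0:ℝ)..b, Real.cos (t ^ 3 / 3 + x * t)) =
      (∫ t in (0:ℝ)..b, Fk 0 x t).re - (I * ∫ s in (0:ℝ)..1, ph x ((b : ℂ) + s * I)).re := by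
  have H := Complex.integral_boundary_rect_eq_zero_of_differentiableOn (ph x) 0 ((b : ℂ) + I)
    (by unfold ph; fun_prop)
  simp only [zero_re, zero_im, add_re, ofReal_re, I_re, add_zero, add_im, ofReal_im, I_im, zero_add,
    ofReal_zero, zero_mul, ofReal_one, one_mul, smul_eq_mul] at H
  have h1 : ∫ t in (0:ℝ)..b, Fk 0 x t = ∫ t in (0:ℝ)..b, ph x ((t : ℂ) + I) := by
    simp [Fk]
  have h2 : (∫ t in (0:ℝ)..b, Real.cos (t ^ 3 / 3 + x * t)) = (∫ t in (0:ℝ)..b, ph x (t : ℂ)).re := by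
    rw [← Complex.reCLM_apply, ← ContinuousLinearMap.intervalIntegral_comp_comm]
    · congr 1
      funext t
      simp only [ph, Complex.reCLM_apply]
      rw [show I * ((t : ℂ) ^ 3 / 3 + x * t) = ((t ^ 3 / 3 + x * t : ℝ) : ℂ) * I by push_cast; ring]
      rw [Complex.exp_ofReal_mul_I_re]
    · apply Continuous.intervalIntegrable
      unfold ph; fun_prop
  have h3 : (I * ∫ s in (0:ℝ)..1, ph x ((s : ℂ) * I)).re = 0 := by
    have : ∀ s : ℝ, ph x ((s : ℂ) * I) = ((Real.exp (s ^ 3 / 3 - x * s) : ℝ) : ℂ) := by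
      intro s
      unfold ph
      push_cast
      congr 1
      linear_combination ((I ^ 2 - 1) * s ^ 3 / 3 + x * s) * Complex.I_sq
    simp_rw [this]
    rw [intervalIntegral.integral_ofReal]
    simp
  rw [h1, h2]
  have H' := congrArg Complex.re H
  simp only [add_re, sub_re, zero_re] at H'
  rw [h3] at H'
  linarith

lemma tendsto_side (x : ℝ) :
    Tendsto (fun b : ℝ => ∫ s in (0:ℝ)..1, ph x ((b : ℂ) + s * I)) atTop (𝓝 0) := by
  have := intervalIntegral.tendsto_integral_filter_of_dominated_convergence (μ := volume)
    (a := 0) (b := 1) (l := atTop) (F := fun (b : ℝ) (s : ℝ) => ph x ((b : ℂ) + s * I)) (f := fun _ => 0)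
    (fun _ => Real.exp (1 / 3 + |x|)) ?_ ?_ ?_ ?_
  · simpa using this
  · refine Eventually.of_forall fun b => Continuous.aestronglyMeasurable ?_
    unfold ph; fun_prop
  · refine Eventually.of_forall fun b => Eventually.of_forall fun s hs => ?_
    rw [uIoc_of_le zero_le_one] at hs
    rw [norm_ph]
    apply Real.exp_le_exp.2
    have h1 : 0 ≤ b ^ 2 * s := by have := hs.1; positivity
    have h2 : s ^ 3 ≤ 1 := pow_le_one₀ hs.1.le hs.2
    have h3 : -(x * s) ≤ |x| := by
      calc -(x * s) ≤ |x * s| := neg_le_abs _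
        _ = |x| * s := by rw [abs_mul, abs_of_pos hs.1]
        _ ≤ |x| * 1 := by gcongr; exact hs.2
        _ = |x| := mul_one _
    linarith
  · exact intervalIntegrable_const
  · refine Eventually.of_forall fun s hs => ?_
    rw [uIoc_of_le zero_le_one] at hs
    rw [tendsto_zero_iff_norm_tendsto_zero]
    simp_rw [norm_ph]
    apply Real.tendsto_exp_atBot.comp
    have : Tendsto (fun b : ℝ => b ^ 2 * s) atTop atTop :=
      (tendsto_pow_atTop two_ne_zero).atTop_mul_const hs.1
    have h2 := (tendsto_neg_atTop_atBot.comp this)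
    have h3 := tendsto_atBot_add_const_right atTop (s ^ 3 / 3 - x * s) h2
    refine h3.congr fun b => ?_
    simp only [Function.comp]
    ring

lemma Ai_eq (x : ℝ) : Ai x = (1 / Real.pi) * (A 0 x).re := by
  unfold Ai
  congr 1
  apply Tendsto.limUnder_eq
  simp_rw [contour]
  have h1 : Tendsto (fun b : ℝ => ∫ t in (0:ℝ)..b, Fk 0 x t) atTop (𝓝 (A 0 x)) :=
    intervalIntegral_tendsto_integral_Ioi 0 (int_Fk 0 x) tendsto_id
  have h2 := (tendsto_side x).const_mul I
  have h3 := ((Complex.continuous_re.tendsto _).comp h1).sub ((Complex.continuous_re.tendsto _).comp h2)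
  simpa using h3

/-- The derivative of the Airy function. -/
noncomputable def D (x : ℝ) : ℝ := (1 / Real.pi) * (A 1 x).re

lemma hasDerivAt_re (k : ℕ) (x : ℝ) :
    HasDerivAt (fun x => (1 / Real.pi) * (A k x).re) ((1 / Real.pi) * (A (k + 1) x).re) x :=
  (((Complex.reCLM.hasFDerivAt (x := A k x)).comp_hasDerivAt x (deriv_A k x))).const_mul _

lemma hasDerivAt_Ai (x : ℝ) : HasDerivAt Ai (D x) x := by
  have : Ai = fun x => (1 / Real.pi) * (A 0 x).re := funext Ai_eq
  rw [this]
  exact hasDerivAt_re 0 x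

lemma deriv_Ai : deriv Ai = D := funext fun x => (hasDerivAt_Ai x).deriv

lemma ode_A (x : ℝ) : (A 2 x).re = x * (A 0 x).re := by
  have hd : ∀ t ∈ Ici (0:ℝ), HasDerivAt (fun t : ℝ => -I * ph x ((t : ℂ) + I))
      (x * Fk 0 x t - Fk 2 x t) t := by
    intro t _
    have h : HasDerivAt (fun t : ℝ => (t : ℂ) + I) 1 t :=
      (Complex.ofRealCLM.hasDerivAt (x := t)).add_const I
    have h2 := (((((h.pow 3).div_const 3).add (h.const_mul (x : ℂ))).const_mul I).cexp).const_mul (-I)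
    unfold Fk ph
    refine h2.congr_deriv ?_
    push_cast
    simp only [pow_zero, one_mul, mul_one]
    linear_combination -(Complex.exp (I * (((t : ℂ) + I) ^ 3 / 3 + x * ((t : ℂ) + I)))) *
      (x:ℂ) * Complex.I_sq
  have hi : IntegrableOn (fun t => x * Fk 0 x t - Fk 2 x t) (Ioi 0) :=
    ((int_Fk 0 x).const_mul (x : ℂ)).sub (int_Fk 2 x)
  have hl : Tendsto (fun t : ℝ => -I * ph x ((t : ℂ) + I)) atTop (𝓝 0) := by
    rw [tendsto_zero_iff_norm_tendsto_zero]
    simp_rw [norm_mul, norm_ph', norm_neg, Complex.norm_I, one_mul]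
    apply Real.tendsto_exp_atBot.comp
    have h2 := (tendsto_neg_atTop_atBot.comp (tendsto_pow_atTop (α := ℝ) two_ne_zero))
    have h3 := tendsto_atBot_add_const_right atTop (1 / 3 - x) h2
    refine h3.congr fun b => ?_
    simp only [Function.comp]
    ring
  have key := integral_Ioi_of_hasDerivAt_of_tendsto' hd hi hl
  rw [integral_sub ((int_Fk 0 x).const_mul (x : ℂ)) (int_Fk 2 x), integral_const_mul] at key
  have h0 : ph x (((0:ℝ) : ℂ) + I) = ((Real.exp (1 / 3 - x) : ℝ) : ℂ) := by
    unfold ph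
    push_cast
    congr 1
    linear_combination ((I ^ 2 - 1) / 3 + x) * Complex.I_sq
  rw [h0] at key
  have := congrArg Complex.re key
  change (x * A 0 x - A 2 x).re = _ at this
  have e : (0 - -I * ((Real.exp (1 / 3 - x) : ℝ) : ℂ)).re = 0 := by
    rw [zero_sub, neg_mul, neg_neg, Complex.re_mul_ofReal, Complex.I_re, zero_mul]
  rw [e, Complex.sub_re, Complex.re_ofReal_mul] at this
  linarith

lemma hasDerivAt_D (x : ℝ) : HasDerivAt D (x * Ai x) x := by
  have := hasDerivAt_re 1 x
  refine HasDerivAt.congr_deriv (f := D) this ?_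
  rw [Ai_eq, ode_A]; ring

lemma Ai_exp (x : ℝ) : |Ai x| ≤ Real.exp (7 / 3) * Real.exp (-x) := by
  rw [Ai_eq, abs_mul, abs_of_pos (by positivity), ← Real.exp_add]
  have h1 : |(A 0 x).re| ≤ Real.exp (7 / 3 + -x) := by
    refine (Complex.abs_re_le_norm _).trans ((norm_A_le 0 x).trans ?_)
    simp [sub_eq_add_neg]
  have h2 : 1 / Real.pi ≤ 1 := by
    rw [div_le_one Real.pi_pos]; linarith [Real.pi_gt_three]
  calc _ ≤ 1 * Real.exp (7 / 3 + -x) := by gcongr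
    _ = _ := one_mul _

lemma D_exp (x : ℝ) : |D x| ≤ Real.exp (7 / 3) * Real.exp (-x) := by
  rw [D, abs_mul, abs_of_pos (by positivity), ← Real.exp_add]
  have h1 : |(A 1 x).re| ≤ Real.exp (7 / 3 + -x) := by
    refine (Complex.abs_re_le_norm _).trans ((norm_A_le 1 x).trans ?_)
    simp [sub_eq_add_neg]
  have h2 : 1 / Real.pi ≤ 1 := by
    rw [div_le_one Real.pi_pos]; linarith [Real.pi_gt_three]
  calc _ ≤ 1 * Real.exp (7 / 3 + -x) := by gcongr
    _ = _ := one_mul _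

end AiryAux


namespace AiryAux
open Topology

lemma hns (s : ℝ) : HasDerivAt (fun s : ℝ => -s ^ 2) (-(2 * s)) s := by
  refine HasDerivAt.congr_deriv (f := fun s : ℝ => -s ^ 2) (hasDerivAt_pow 2 s).neg ?_
  simp

lemma da (s : ℝ) : HasDerivAt (fun s => Ai (-s ^ 2)) (-2 * s * D (-s ^ 2)) s := by
  have h : HasDerivAt (fun s : ℝ => -s ^ 2) (-(2 * s)) s := hns s
  refine ((hasDerivAt_Ai (-s ^ 2)).comp s h).congr_deriv ?_
  ring

lemma db (s : ℝ) : HasDerivAt (fun s => D (-s ^ 2)) (2 * s ^ 3 * Ai (-s ^ 2)) s := by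
  have h : HasDerivAt (fun s : ℝ => -s ^ 2) (-(2 * s)) s := hns s
  refine ((hasDerivAt_D (-s ^ 2)).comp s h).congr_deriv ?_
  ring

/-- Modified energy. -/
noncomputable def En (s : ℝ) : ℝ :=
  s * Ai (-s ^ 2) ^ 2 + D (-s ^ 2) ^ 2 / s - Ai (-s ^ 2) * D (-s ^ 2) / (2 * s ^ 3)

lemma dEn (s : ℝ) (hs : 0 < s) :
    HasDerivAt En (3 * Ai (-s ^ 2) * D (-s ^ 2) / (2 * s ^ 4)) s := by
  have hs0 : s ≠ 0 := hs.ne'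
  have h1 := (hasDerivAt_id s).mul ((da s).pow 2)
  have h2 := ((db s).pow 2).div (hasDerivAt_id s) hs0
  have h3 := ((da s).mul (db s)).div ((hasDerivAt_pow 3 s).const_mul 2)
    (by positivity : 2 * s ^ 3 ≠ 0)
  refine HasDerivAt.congr_deriv (f := En) ((h1.add h2).sub h3) ?_
  simp only [Pi.pow_apply, Pi.mul_apply, id]
  push_cast
  field_simp
  ring

lemma ab_le (s a b : ℝ) (hs : 0 < s) : |a * b| ≤ (s * a ^ 2 + b ^ 2 / s) / 2 := by
  have h : b ^ 2 / s = s * (b / s) ^ 2 := by field_simp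
  have h2 : a * b = s * (a * (b / s)) := by field_simp
  rw [h, h2, abs_mul, abs_of_pos hs]
  have : |a * (b / s)| ≤ (a ^ 2 + (b / s) ^ 2) / 2 := by
    rw [abs_le]; constructor <;> nlinarith [sq_nonneg (a - b / s), sq_nonneg (a + b / s)]
  nlinarith

lemma En_ge (s : ℝ) (hs : 1 ≤ s) :
    3 / 4 * (s * Ai (-s ^ 2) ^ 2 + D (-s ^ 2) ^ 2 / s) ≤ En s := by
  have hs0 : 0 < s := by linarith
  have h := ab_le s (Ai (-s ^ 2)) (D (-s ^ 2)) hs0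
  unfold En
  have h2 : Ai (-s ^ 2) * D (-s ^ 2) / (2 * s ^ 3) ≤ |Ai (-s ^ 2) * D (-s ^ 2)| / 2 := by
    have h3 : (1:ℝ) ≤ s ^ 3 := one_le_pow₀ hs
    calc _ ≤ |Ai (-s ^ 2) * D (-s ^ 2)| / (2 * s ^ 3) := by gcongr; exact le_abs_self _
      _ ≤ _ := by gcongr; linarith
  linarith

lemma En_bdd : ∃ C : ℝ, 0 ≤ C ∧ ∀ s : ℝ, 1 ≤ s →
    s * Ai (-s ^ 2) ^ 2 ≤ C ∧ D (-s ^ 2) ^ 2 ≤ C * s := by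
  have hd : ∀ s : ℝ, 0 < s → HasDerivAt (fun s => En s * Real.exp (1 / (3 * s ^ 3)))
      ((3 * Ai (-s ^ 2) * D (-s ^ 2) / (2 * s ^ 4) - En s / s ^ 4) * Real.exp (1 / (3 * s ^ 3))) s := by
    intro s hs
    have h0 : HasDerivAt (fun s : ℝ => 1 / (3 * s ^ 3)) (-1 / s ^ 4) s := by
      refine ((hasDerivAt_const s (1:ℝ)).div ((hasDerivAt_pow 3 s).const_mul 3)
        (by positivity : 3 * s ^ 3 ≠ 0)).congr_deriv ?_
      field_simp
      ring
    refine ((dEn s hs).mul h0.exp).congr_deriv ?_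
    ring
  have hanti : AntitoneOn (fun s => En s * Real.exp (1 / (3 * s ^ 3))) (Ici 1) := by
    apply antitoneOn_of_deriv_nonpos (convex_Ici 1)
    · intro s hs
      exact (hd s (lt_of_lt_of_le one_pos hs)).continuousAt.continuousWithinAt
    · intro s hs
      rw [interior_Ici] at hs
      exact (hd s (lt_trans one_pos hs)).differentiableAt.differentiableWithinAt
    · intro s hs
      rw [interior_Ici] at hs
      have hs1 : 1 < s := hs
      have hs0 : 0 < s := by linarith
      rw [(hd s hs0).deriv]
      apply mul_nonpos_of_nonpos_of_nonneg _ (Real.exp_pos _).le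
      have h1 := En_ge s hs1.le
      have h2 := (le_abs_self _).trans (ab_le s (Ai (-s ^ 2)) (D (-s ^ 2)) hs0)
      have : 3 * Ai (-s ^ 2) * D (-s ^ 2) / (2 * s ^ 4) - En s / s ^ 4 =
        (3 / 2 * (Ai (-s ^ 2) * D (-s ^ 2)) - En s) / s ^ 4 := by field_simp
      rw [this]
      apply div_nonpos_of_nonpos_of_nonneg _ (by positivity)
      linarith
  have hpos : ∀ s : ℝ, 1 ≤ s → 0 ≤ En s := fun s hs => le_trans (by positivity) (En_ge s hs)
  refine ⟨4 / 3 * (En 1 * Real.exp (1 / (3 * 1 ^ 3))), ?_, fun s hs => ?_⟩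
  · have := hpos 1 le_rfl
    positivity
  · have h1 : En s * Real.exp (1 / (3 * s ^ 3)) ≤ En 1 * Real.exp (1 / (3 * 1 ^ 3)) :=
      hanti (mem_Ici.2 le_rfl) (mem_Ici.2 hs) hs
    have hs0 : 0 < s := by linarith
    have h2 : En s ≤ En s * Real.exp (1 / (3 * s ^ 3)) :=
      le_mul_of_one_le_right (hpos s hs) (Real.one_le_exp (by positivity))
    have h3 := En_ge s hs
    have h4 : 0 ≤ D (-s ^ 2) ^ 2 / s := by positivity
    have h5 : 0 ≤ s * Ai (-s ^ 2) ^ 2 := by positivity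
    refine ⟨by linarith, ?_⟩
    rw [← div_le_iff₀ hs0]
    linarith

/-- Uniform decay bounds. -/
lemma decay : ∃ C : ℝ, 0 < C ∧ ∀ y : ℝ, 1 ≤ |y| →
    |Ai y| ≤ C * |y| ^ (-(1:ℝ)/4) ∧ |D y| ≤ C * (|y| * |y| ^ (-(1:ℝ)/4)) := by
  obtain ⟨C, hC, h⟩ := En_bdd
  have hr : ∀ y : ℝ, 1 ≤ |y| → |y|⁻¹ ≤ |y| ^ (-(1:ℝ)/4) ∧ 1 ≤ |y| * |y| ^ (-(1:ℝ)/4) := by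
    intro y hy
    have hy0 : 0 < |y| := by linarith
    have h1 : |y|⁻¹ ≤ |y| ^ (-(1:ℝ)/4) := by
      rw [← Real.rpow_neg_one]
      exact Real.rpow_le_rpow_of_exponent_le hy (by norm_num)
    refine ⟨h1, ?_⟩
    calc (1:ℝ) = |y| * |y|⁻¹ := by field_simp
      _ ≤ _ := by gcongr
  refine ⟨Real.sqrt C + Real.exp (7 / 3), by positivity, fun y hy => ?_⟩
  have hy0 : 0 < |y| := by linarith
  obtain ⟨hr1, hr2⟩ := hr y hy
  rcases le_total 0 y with hp | hn
  · rw [abs_of_nonneg hp] at *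
    have he : Real.exp (-y) ≤ y⁻¹ := by
      rw [Real.exp_neg]
      apply inv_anti₀ hy0
      linarith [Real.add_one_le_exp y]
    have hy1 : y⁻¹ ≤ 1 := inv_le_one_of_one_le₀ hy
    constructor
    · refine (Ai_exp y).trans ?_
      gcongr
      · linarith [Real.sqrt_nonneg C]
      · exact he.trans hr1
    · refine (D_exp y).trans ?_
      gcongr
      · linarith [Real.sqrt_nonneg C]
      · linarith
  · have ha : |y| = -y := abs_of_nonpos hn
    set s := Real.sqrt |y| with hs
    have hs2 : s ^ 2 = |y| := Real.sq_sqrt hy0.le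
    have hs1 : 1 ≤ s := Real.one_le_sqrt.2 hy
    have hs0 : 0 < s := by linarith
    obtain ⟨h1, h2⟩ := h s hs1
    have hy' : -s ^ 2 = y := by rw [hs2, ha]; ring
    rw [hy'] at h1 h2
    set r := |y| ^ (-(1:ℝ)/4) with hrdef
    have hr0 : 0 < r := Real.rpow_pos_of_pos hy0 _
    have hrs : r ^ 2 * s = 1 := by
      rw [hrdef, hs, Real.sqrt_eq_rpow, ← Real.rpow_natCast, ← Real.rpow_mul hy0.le,
        ← Real.rpow_add hy0]
      norm_num
    have e1 : |Ai y| ≤ Real.sqrt C * r := by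
      refine abs_le_of_sq_le_sq ?_ (by positivity)
      rw [mul_pow, Real.sq_sqrt hC]
      calc Ai y ^ 2 = r ^ 2 * (s * Ai y ^ 2) := by rw [← mul_assoc, hrs, one_mul]
        _ ≤ r ^ 2 * C := by gcongr
        _ = _ := mul_comm _ _
    have e2 : |D y| ≤ Real.sqrt C * (|y| * r) := by
      refine abs_le_of_sq_le_sq ?_ (by positivity)
      rw [mul_pow, Real.sq_sqrt hC]
      refine h2.trans ?_
      gcongr
      rw [← hs2]
      calc s ≤ s * s ^ 2 := le_mul_of_one_le_right hs0.le (one_le_pow₀ hs1)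
        _ = s ^ 2 * s * (r ^ 2 * s) := by rw [hrs]; ring
        _ = (s ^ 2 * r) ^ 2 := by ring
    have e3 := Real.exp_pos (7 / 3)
    constructor
    · exact e1.trans (by gcongr; linarith)
    · exact e2.trans (by gcongr; linarith)

/-! ### Tail integral -/

lemma cont_Ai : Continuous Ai :=
  continuous_iff_continuousAt.2 fun x => (hasDerivAt_Ai x).continuousAt

lemma cont_D : Continuous D :=
  continuous_iff_continuousAt.2 fun x => (hasDerivAt_D x).continuousAt

noncomputable def G (y : ℝ) : ℝ := ∫ u in Set.Ioi y, Ai u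

lemma int_Ai (y : ℝ) : IntegrableOn Ai (Ioi y) := by
  refine Integrable.mono' ((integrableOn_exp_neg_Ioi y).const_mul (Real.exp (7 / 3)))
    cont_Ai.aestronglyMeasurable ?_
  exact Eventually.of_forall fun x => Ai_exp x

lemma G_sub (a b : ℝ) : ∫ u in a..b, Ai u = G a - G b :=
  (intervalIntegral.integral_Ioi_sub_Ioi' (int_Ai a) (int_Ai b)).symm

lemma dG (y : ℝ) : HasDerivAt G (-Ai y) y := by
  have : G = fun y => G 0 - ∫ u in (0:ℝ)..y, Ai u := by
    funext y; rw [G_sub]; ring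
  rw [this]
  exact (cont_Ai.integral_hasStrictDerivAt 0 y).hasDerivAt.const_sub _

lemma cont_G : Continuous G :=
  continuous_iff_continuousAt.2 fun x => (dG x).continuousAt

lemma G_exp (y : ℝ) : |G y| ≤ Real.exp (7 / 3) * Real.exp (-y) := by
  have := norm_integral_le_of_norm_le ((integrableOn_exp_neg_Ioi y).const_mul (Real.exp (7 / 3)))
    (f := Ai) (Eventually.of_forall fun x => Ai_exp x)
  rw [integral_const_mul, integral_exp_neg_Ioi] at this
  exact this

lemma tendsto_of_exp (f : ℝ → ℝ) (h : ∀ y, |f y| ≤ Real.exp (7 / 3) * Real.exp (-y)) :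
    Tendsto f atTop (𝓝 0) := by
  have h1 : Tendsto (fun y : ℝ => Real.exp (7 / 3) * Real.exp (-y)) atTop (𝓝 0) := by
    simpa using (Real.tendsto_exp_neg_atTop_nhds_zero).const_mul (Real.exp (7 / 3))
  exact squeeze_zero_norm h h1

lemma G_bdd : ∃ M : ℝ, 0 < M ∧ ∀ y, |G y| ≤ M := by
  obtain ⟨C, hC, h⟩ := En_bdd
  set H : ℝ → ℝ := fun s => G (-s ^ 2) - D (-s ^ 2) / s ^ 2 with hH
  have hb : ∀ s : ℝ, 1 ≤ s → |D (-s ^ 2)| ≤ Real.sqrt C * s := by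
    intro s hs
    refine abs_le_of_sq_le_sq ?_ (by positivity)
    rw [mul_pow, Real.sq_sqrt hC]
    exact (h s hs).2.trans (by gcongr; nlinarith)
  have hd : ∀ s : ℝ, 0 < s → HasDerivAt H (2 * D (-s ^ 2) / s ^ 3) s := by
    intro s hs
    have h0 : HasDerivAt (fun s : ℝ => -s ^ 2) (-(2 * s)) s := hns s
    have h1 := (dG (-s ^ 2)).comp s h0
    have h2 := (db s).div (hasDerivAt_pow 2 s) (by positivity)
    refine HasDerivAt.congr_deriv (f := H) (h1.sub h2) ?_
    push_cast
    field_simp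
    ring
  set K := 2 * Real.sqrt C with hK
  have hinv : ∀ s : ℝ, 0 < s → HasDerivAt (fun s : ℝ => K / s) (-K / s ^ 2) s := by
    intro s hs
    refine ((hasDerivAt_const s K).div (hasDerivAt_id s) hs.ne').congr_deriv ?_
    simp
  have hbd : ∀ s : ℝ, 1 ≤ s → |2 * D (-s ^ 2) / s ^ 3| ≤ K / s ^ 2 := by
    intro s hs
    have hs0 : 0 < s := by linarith
    rw [abs_div, abs_mul, abs_two, abs_of_pos (by positivity : 0 < s ^ 3)]
    calc _ ≤ 2 * (Real.sqrt C * s) / s ^ 3 := by gcongr; exact hb s hs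
      _ = _ := by rw [hK]; field_simp
  have hbound : ∀ s : ℝ, 1 ≤ s → |H s| ≤ |H 1| + K := by
    intro s hs
    have hs0 : 0 < s := by linarith
    have a1 : AntitoneOn (fun s => H s + K / s) (Ici 1) := by
      have hd' : ∀ s : ℝ, 0 < s → _ := fun s hs => (hd s hs).add (hinv s hs)
      apply antitoneOn_of_deriv_nonpos (convex_Ici 1)
      · intro s hs
        exact (hd' s (lt_of_lt_of_le one_pos hs)).continuousAt.continuousWithinAt
      · intro s hs
        rw [interior_Ici] at hs
        exact (hd' s (lt_trans one_pos hs)).differentiableAt.differentiableWithinAt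
      · intro s hs
        rw [interior_Ici] at hs
        refine (hd' s (lt_trans one_pos hs)).deriv.le.trans ?_
        have := (abs_le.1 (hbd s (le_of_lt hs))).2
        rw [neg_div]; linarith
    have a2 : MonotoneOn (fun s => H s - K / s) (Ici 1) := by
      have hd' : ∀ s : ℝ, 0 < s → _ := fun s hs => (hd s hs).sub (hinv s hs)
      apply monotoneOn_of_deriv_nonneg (convex_Ici 1)
      · intro s hs
        exact (hd' s (lt_of_lt_of_le one_pos hs)).continuousAt.continuousWithinAt
      · intro s hs
        rw [interior_Ici] at hs
        exact (hd' s (lt_trans one_pos hs)).differentiableAt.differentiableWithinAt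
      · intro s hs
        rw [interior_Ici] at hs
        refine le_trans ?_ (hd' s (lt_trans one_pos hs)).deriv.ge
        have := (abs_le.1 (hbd s (le_of_lt hs))).1
        rw [neg_div]; linarith
    have b1 : H s + K / s ≤ H 1 + K / 1 := a1 (mem_Ici.2 le_rfl) (mem_Ici.2 hs) hs
    have b2 : H 1 - K / 1 ≤ H s - K / s := a2 (mem_Ici.2 le_rfl) (mem_Ici.2 hs) hs
    have hK0 : 0 ≤ K / s := by positivity
    rw [div_one] at b1 b2
    rw [abs_le]
    constructor
    · linarith [neg_abs_le (H 1)]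
    · linarith [le_abs_self (H 1)]
  refine ⟨|H 1| + K + Real.sqrt C + Real.exp (7 / 3) * Real.exp 1, by positivity, fun y => ?_⟩
  have hp : 0 < Real.exp (7 / 3) * Real.exp 1 := by positivity
  have hK0 : 0 ≤ K := by positivity
  have hC0 := Real.sqrt_nonneg C
  rcases le_total (-1) y with hy | hy
  · have h1 : |G y| ≤ Real.exp (7 / 3) * Real.exp 1 :=
      (G_exp y).trans (by gcongr; linarith)
    linarith [abs_nonneg (H 1)]
  · set s := Real.sqrt (-y) with hs
    have hs2 : s ^ 2 = -y := Real.sq_sqrt (by linarith)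
    have hs1 : 1 ≤ s := Real.one_le_sqrt.2 (by linarith)
    have hs0 : 0 < s := by linarith
    have hy' : -s ^ 2 = y := by rw [hs2]; ring
    have c1 := hbound s hs1
    have c2 : |D (-s ^ 2) / s ^ 2| ≤ Real.sqrt C := by
      rw [abs_div, abs_of_pos (by positivity : 0 < s ^ 2), div_le_iff₀ (by positivity)]
      refine (hb s hs1).trans ?_
      gcongr
      nlinarith
    have c3 : G y = H s + D (-s ^ 2) / s ^ 2 := by rw [hH]; simp only [hy']; ring
    rw [c3]
    refine (abs_add_le _ _).trans ?_
    linarith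

end AiryAux


namespace AiryAux
open Topology

lemma int_shift (f : ℝ → ℝ) (hf : Continuous f) (h : ∀ y, |f y| ≤ Real.exp (7 / 3) * Real.exp (-y))
    (a : ℝ) : IntegrableOn (fun s => f (a + s)) (Ioi 0) := by
  refine Integrable.mono' ((integrableOn_exp_neg_Ioi 0).const_mul (Real.exp (7 / 3) * Real.exp (-a)))
    (hf.comp (by fun_prop)).aestronglyMeasurable ?_
  refine Eventually.of_forall fun s => (h (a + s)).trans (le_of_eq ?_)
  rw [neg_add, Real.exp_add]; ring

lemma shift_tendsto (f : ℝ → ℝ) (h : Tendsto f atTop (𝓝 0)) (a : ℝ) :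
    Tendsto (fun s => f (a + s)) atTop (𝓝 0) :=
  h.comp (tendsto_atTop_add_const_left atTop a tendsto_id)

lemma Ai_bdd_right (c : ℝ) : ∀ y, c ≤ y → |Ai y| ≤ Real.exp (7 / 3) * Real.exp (-c) :=
  fun y hy => (Ai_exp y).trans (by gcongr)

lemma int_AiAi (a b : ℝ) : IntegrableOn (fun s => Ai (a + s) * Ai (b + s)) (Ioi 0) := by
  refine Integrable.mono' ((int_shift Ai cont_Ai Ai_exp b).norm.const_mul
    (Real.exp (7 / 3) * Real.exp (-a)))
    (by have := cont_Ai; exact Continuous.aestronglyMeasurable (by fun_prop)) ?_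
  filter_upwards [ae_restrict_mem measurableSet_Ioi] with s hs
  rw [norm_mul]
  have : (0:ℝ) < s := hs
  gcongr
  exact Ai_bdd_right a _ (by linarith)

lemma int_AiG (a b : ℝ) : IntegrableOn (fun s => Ai (a + s) * G (b + s)) (Ioi 0) := by
  obtain ⟨M, hM, h⟩ := G_bdd
  refine Integrable.mono' ((int_shift Ai cont_Ai Ai_exp a).norm.mul_const M)
    (by have := cont_Ai; have := cont_G; exact Continuous.aestronglyMeasurable (by fun_prop)) ?_
  refine Eventually.of_forall fun s => ?_
  rw [norm_mul]
  gcongr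
  exact h _

lemma dshift (f : ℝ → ℝ) (f' a s : ℝ) (h : HasDerivAt f f' (a + s)) :
    HasDerivAt (fun s => f (a + s)) f' s := h.comp_const_add a s

lemma KAi_eq (u a : ℝ) (h : u ≠ a) : KAi u a = ∫ s in Ioi (0:ℝ), Ai (u + s) * Ai (a + s) := by
  have h' : u - a ≠ 0 := sub_ne_zero.2 h
  have hd : ∀ s ∈ Ici (0:ℝ), HasDerivAt
      (fun s => -((Ai (u + s) * D (a + s) - D (u + s) * Ai (a + s)) / (u - a)))
      (Ai (u + s) * Ai (a + s)) s := by
    intro s _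
    have h1 := dshift Ai _ u s (hasDerivAt_Ai _)
    have h2 := dshift Ai _ a s (hasDerivAt_Ai _)
    have h3 := dshift D _ u s (hasDerivAt_D _)
    have h4 := dshift D _ a s (hasDerivAt_D _)
    refine HasDerivAt.congr_deriv (f := fun s =>
      -((Ai (u + s) * D (a + s) - D (u + s) * Ai (a + s)) / (u - a)))
      (((h1.mul h4).sub (h3.mul h2)).div_const (u - a)).neg ?_
    field_simp
    ring
  have t1 : ∀ c, Tendsto (fun s => Ai (c + s)) atTop (𝓝 0) :=
    shift_tendsto Ai (tendsto_of_exp Ai Ai_exp)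
  have t2 : ∀ c, Tendsto (fun s => D (c + s)) atTop (𝓝 0) :=
    shift_tendsto D (tendsto_of_exp D D_exp)
  have hl : Tendsto (fun s => -((Ai (u + s) * D (a + s) - D (u + s) * Ai (a + s)) / (u - a)))
      atTop (𝓝 0) := by
    have := ((((t1 u).mul (t2 a)).sub ((t2 u).mul (t1 a))).div_const (u - a)).neg
    simpa using this
  rw [integral_Ioi_of_hasDerivAt_of_tendsto' hd (int_AiAi u a) hl]
  simp [KAi, h, deriv_Ai]

lemma fubini_int (a b : ℝ) : Integrable (Function.uncurry fun u s => Ai (u + s) * Ai (a + s))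
    ((volume.restrict (Set.uIoc a b)).prod (volume.restrict (Ioi (0:ℝ)))) := by
  have hc : IntegrableOn (fun _ : ℝ => Real.exp (7 / 3) * Real.exp (-(min a b))) (Set.uIoc a b) := by
    refine integrableOn_const ?_ ?_
    · rw [uIoc]; simp
    · exact enorm_ne_top
  have := Integrable.mul_prod hc (int_shift Ai cont_Ai Ai_exp a).norm
  refine Integrable.mono' this ?_ ?_
  · have := cont_Ai
    exact Continuous.aestronglyMeasurable (by unfold Function.uncurry; fun_prop)
  · rw [Measure.prod_restrict]
    filter_upwards [ae_restrict_mem (measurableSet_uIoc.prod measurableSet_Ioi)] with p hp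
    have h1 : min a b < p.1 := hp.1.1
    have h2 : (0:ℝ) < p.2 := hp.2
    simp only [Function.uncurry]
    rw [norm_mul]
    gcongr
    exact Ai_bdd_right _ _ (by linarith)

lemma KAi_ae (a b : ℝ) : (fun u => ∫ s in Ioi (0:ℝ), Ai (u + s) * Ai (a + s))
    =ᵐ[volume.restrict (Set.uIoc a b)] fun u => KAi u a := by
  apply ae_restrict_of_ae
  filter_upwards [compl_mem_ae_iff.2 (measure_singleton a)] with u hu
  exact (KAi_eq u a hu).symm

lemma KAi_int (a b : ℝ) : IntervalIntegrable (fun u => KAi u a) volume a b := by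
  rw [intervalIntegrable_iff]
  exact ((fubini_int a b).integral_prod_left).congr (KAi_ae a b)

lemma KAi_integral (a b : ℝ) : ∫ u in a..b, KAi u a =
    ∫ s in Ioi (0:ℝ), (Ai (a + s) * G (a + s) - Ai (a + s) * G (b + s)) := by
  have h1 : ∫ u in a..b, KAi u a = ∫ u in a..b, ∫ s in Ioi (0:ℝ), Ai (u + s) * Ai (a + s) := by
    rw [intervalIntegral.intervalIntegral_eq_integral_uIoc,
      intervalIntegral.intervalIntegral_eq_integral_uIoc, integral_congr_ae (KAi_ae a b)]
  rw [h1, intervalIntegral_integral_swap (fubini_int a b)]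
  congr 1
  funext s
  rw [intervalIntegral.integral_mul_const, intervalIntegral.integral_comp_add_right, G_sub]
  ring

lemma AiG_sum (a b : ℝ) : (∫ s in Ioi (0:ℝ), Ai (a + s) * G (b + s)) +
    (∫ s in Ioi (0:ℝ), Ai (b + s) * G (a + s)) = G a * G b := by
  rw [← integral_add (int_AiG a b) (int_AiG b a)]
  have hd : ∀ s ∈ Ici (0:ℝ), HasDerivAt (fun s => -(G (a + s) * G (b + s)))
      (Ai (a + s) * G (b + s) + Ai (b + s) * G (a + s)) s := by
    intro s _
    have h1 := dshift G _ a s (dG _)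
    have h2 := dshift G _ b s (dG _)
    refine HasDerivAt.congr_deriv (f := fun s => -(G (a + s) * G (b + s))) (h1.mul h2).neg ?_
    ring
  have t1 : ∀ c, Tendsto (fun s => G (c + s)) atTop (𝓝 0) :=
    shift_tendsto G (tendsto_of_exp G G_exp)
  have hl : Tendsto (fun s => -(G (a + s) * G (b + s))) atTop (𝓝 0) := by
    simpa using ((t1 a).mul (t1 b)).neg
  rw [integral_Ioi_of_hasDerivAt_of_tendsto' hd ((int_AiG a b).add (int_AiG b a)) hl]
  simp

lemma AiG_bound (M : ℝ) (hM : ∀ y, |G y| ≤ M) (a b : ℝ) :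
    |∫ s in Ioi (0:ℝ), Ai (a + s) * G (b + s)| ≤ M * ∫ s in Ioi (0:ℝ), |Ai (a + s)| := by
  rw [← integral_const_mul]
  refine norm_integral_le_of_norm_le ((int_shift Ai cont_Ai Ai_exp a).norm.const_mul M)
    (f := fun s => Ai (a + s) * G (b + s)) (Eventually.of_forall fun s => ?_)
  rw [norm_mul, mul_comm]
  exact mul_le_mul_of_nonneg_right (hM _) (norm_nonneg _)

lemma J1_eq (u a : ℝ) : J1 u a = KAi u a + (1/2) * Ai u * (1 - G a) := rfl

/-- The brackets are bounded. -/
lemma bracket (x : ℝ) : ∃ B : ℝ, 0 < B ∧ ∀ y,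
    |(∫ u in x..y, J1 u x) - (1/2) * Real.sign (y - x)| ≤ B ∧
    |(∫ u in y..x, J1 u y) - (1/2) * Real.sign (x - y)| ≤ B := by
  obtain ⟨M, hM0, hM⟩ := G_bdd
  set N := ∫ s in Ioi (0:ℝ), |Ai (x + s)| with hN
  have hN0 : 0 ≤ N := integral_nonneg fun s => abs_nonneg _
  have hJ : ∀ a b, ∫ u in a..b, J1 u a =
      (∫ s in Ioi (0:ℝ), Ai (a + s) * G (a + s)) - (∫ s in Ioi (0:ℝ), Ai (a + s) * G (b + s))
        + (1/2) * (G a - G b) * (1 - G a) := by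
    intro a b
    simp_rw [J1_eq]
    rw [intervalIntegral.integral_add (KAi_int a b)
      (by have := cont_Ai; exact Continuous.intervalIntegrable (by fun_prop) _ _),
      KAi_integral, integral_sub (int_AiG a a) (int_AiG a b), intervalIntegral.integral_mul_const,
      intervalIntegral.integral_const_mul, G_sub]
  have hsq : ∀ a, |∫ s in Ioi (0:ℝ), Ai (a + s) * G (a + s)| ≤ M * M := by
    intro a
    have h1 := AiG_sum a a
    have h2 : |G a * G a| ≤ M * M := by
      rw [abs_mul]; gcongr <;> exact hM _
    have h3 : (∫ s in Ioi (0:ℝ), Ai (a + s) * G (a + s)) = G a * G a / 2 := by linarith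
    rw [h3, abs_div, abs_two]
    linarith [abs_nonneg (G a * G a)]
  have hx : ∀ y, |∫ s in Ioi (0:ℝ), Ai (x + s) * G (y + s)| ≤ M * N := fun y => AiG_bound M hM x y
  have hy : ∀ y, |∫ s in Ioi (0:ℝ), Ai (y + s) * G (x + s)| ≤ M * M + M * N := by
    intro y
    have h1 := AiG_sum y x
    have h2 : |G y * G x| ≤ M * M := by
      rw [abs_mul]; gcongr <;> exact hM _
    have h3 : (∫ s in Ioi (0:ℝ), Ai (y + s) * G (x + s)) =
      G y * G x - ∫ s in Ioi (0:ℝ), Ai (x + s) * G (y + s) := by linarith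
    rw [h3]
    refine (abs_sub _ _).trans ?_
    linarith [hx y]
  have hg : ∀ a b, |(1/2) * (G a - G b) * (1 - G a)| ≤ M * (1 + M) := by
    intro a b
    rw [abs_mul, abs_mul, abs_of_pos (by norm_num : (0:ℝ) < 1/2)]
    have h1 : |G a - G b| ≤ 2 * M := (abs_sub _ _).trans (by linarith [hM a, hM b])
    have h2 : |1 - G a| ≤ 1 + M := (abs_sub _ _).trans (by rw [abs_one]; linarith [hM a])
    calc _ ≤ 1 / 2 * (2 * M) * (1 + M) := by gcongr
      _ = _ := by ring
  have hs : ∀ z : ℝ, |(1/2) * Real.sign z| ≤ 1 := by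
    intro z
    rcases Real.sign_apply_eq z with h | h | h <;> rw [h] <;> norm_num
  refine ⟨M * M + (M * M + M * N) + M * (1 + M) + 1, by positivity, fun y => ⟨?_, ?_⟩⟩
  · rw [hJ]
    refine (abs_sub _ _).trans ?_
    have h1 := abs_add_le ((∫ s in Ioi (0:ℝ), Ai (x + s) * G (x + s)) -
      (∫ s in Ioi (0:ℝ), Ai (x + s) * G (y + s))) ((1/2) * (G x - G y) * (1 - G x))
    have h2 := abs_sub (∫ s in Ioi (0:ℝ), Ai (x + s) * G (x + s))
      (∫ s in Ioi (0:ℝ), Ai (x + s) * G (y + s))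
    have h3 : 0 ≤ M * M := by positivity
    linarith [hsq x, hx y, hg x y, hs (y - x)]
  · rw [hJ]
    refine (abs_sub _ _).trans ?_
    have h1 := abs_add_le ((∫ s in Ioi (0:ℝ), Ai (y + s) * G (y + s)) -
      (∫ s in Ioi (0:ℝ), Ai (y + s) * G (x + s))) ((1/2) * (G y - G x) * (1 - G y))
    have h2 := abs_sub (∫ s in Ioi (0:ℝ), Ai (y + s) * G (y + s))
      (∫ s in Ioi (0:ℝ), Ai (y + s) * G (x + s))
    linarith [hsq y, hy y, hg y x, hs (x - y)]

end AiryAux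


namespace AiryAux
open Topology

lemma KAi_ne (x y : ℝ) (h : x ≠ y) : KAi x y = (Ai x * D y - D x * Ai y) / (x - y) := by
  simp [KAi, h, deriv_Ai]

lemma deriv_J1 (x y : ℝ) (h : x ≠ y) : deriv (fun v => J1 x v) y =
    (Ai x * (y * Ai y) - D x * D y) / (x - y) + KAi x y / (x - y) + 1 / 2 * Ai x * Ai y := by
  have h0 : x - y ≠ 0 := sub_ne_zero.2 h
  have hn : HasDerivAt (fun v => Ai x * D v - D x * Ai v) (Ai x * (y * Ai y) - D x * D y) y :=
    ((hasDerivAt_D y).const_mul (Ai x)).sub ((hasDerivAt_Ai y).const_mul (D x))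
  have hden : HasDerivAt (fun v => x - v) (-1) y := by
    simpa using (hasDerivAt_id y).const_sub x
  have hg : HasDerivAt (fun v => (1/2) * Ai x * (1 - G v)) ((1/2) * Ai x * Ai y) y := by
    refine (((dG y).const_sub 1).const_mul ((1/2) * Ai x)).congr_deriv ?_
    ring
  have hd := (hn.div hden h0).add hg
  have hev : (fun v => J1 x v) =ᶠ[𝓝 y]
      fun v => (Ai x * D v - D x * Ai v) / (x - v) + (1/2) * Ai x * (1 - G v) := by
    filter_upwards [isOpen_ne.mem_nhds h.symm] with v hv
    rw [J1_eq, KAi_ne x v (Ne.symm hv)]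
  have hd2 : HasDerivAt (fun v => J1 x v) _ y := HasDerivAt.congr_of_eventuallyEq hd hev
  rw [hd2.deriv, KAi_ne x y h]
  field_simp
  ring

set_option maxHeartbeats 1000000 in
theorem main (x : ℝ) :
    ∃ C : ℝ, 0 < C ∧ ∀ y : ℝ, |x| + 1 ≤ |y| →
      |L1 x y| ≤ C * (|y| ^ (-(3:ℝ)/2) + |y| ^ (-(1:ℝ)/4)) ∧
      |L1 y x| ≤ C * (|y| ^ (-(3:ℝ)/2) + |y| ^ (-(1:ℝ)/4)) := by
  obtain ⟨C, hC, hdec⟩ := decay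
  obtain ⟨M, hM, hG⟩ := G_bdd
  obtain ⟨B, hB, hbr⟩ := bracket x
  set q := |x| + 1 with hq
  set a := |Ai x| with ha
  set e := |D x| with he
  have ha0 : 0 ≤ a := abs_nonneg _
  have he0 : 0 ≤ e := abs_nonneg _
  have hx0 : 0 ≤ |x| := abs_nonneg _
  have hq0 : 0 < q := by positivity
  -- constants
  set k := C * (a * q + e) with hk
  have hk0 : 0 ≤ k := by positivity
  set j1 := k + 1 / 2 * a * (1 + M) with hj1
  set j2 := k + 1 / 2 * C * (1 + M) with hj2
  set d1 := C * ((a + e) * q) + k + 1 / 2 * a * C with hd1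
  set d2 := C * (|x| * a + e * q) + k + 1 / 2 * a * C with hd2
  have hj10 : 0 ≤ j1 := by positivity
  have hj20 : 0 ≤ j2 := by positivity
  have hd10 : 0 ≤ d1 := by positivity
  have hd20 : 0 ≤ d2 := by positivity
  refine ⟨j1 * j2 + d1 * B + d2 * B + 1, by positivity, fun y hy => ?_⟩
  have hy1 : 1 ≤ |y| := by linarith
  have hy0 : 0 < |y| := by linarith
  obtain ⟨hA, hD⟩ := hdec y hy1
  obtain ⟨hb1, hb2⟩ := hbr y
  set r := |y| ^ (-(1:ℝ)/4) with hr
  have hr0 : 0 < r := Real.rpow_pos_of_pos hy0 _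
  have hr1 : r ≤ 1 := Real.rpow_le_one_of_one_le_of_nonpos hy1 (by norm_num)
  have hw : 0 ≤ |y| ^ (-(3:ℝ)/2) := Real.rpow_nonneg hy0.le _
  set d := |x - y| with hd
  have hdy : |y| - |x| ≤ d := by
    rw [hd, abs_sub_comm]; exact abs_sub_abs_le_abs_sub y x
  have hd1' : 1 ≤ d := by linarith
  have hd0 : 0 < d := by linarith
  have hyq : |y| ≤ q * d := by
    have : q * (|y| - |x|) ≤ q * d := by gcongr
    nlinarith
  have hne : x ≠ y := by
    intro h; rw [hd, h] at hd1'; simp at hd1'; linarith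
  have hd' : |y - x| = d := abs_sub_comm _ _
  have hKs : KAi y x = KAi x y := by
    rw [KAi_ne x y hne, KAi_ne y x hne.symm, div_eq_div_iff (sub_ne_zero.2 hne.symm) (sub_ne_zero.2 hne)]
    ring
  have hK : |KAi x y| ≤ k * r := by
    rw [KAi_ne x y hne, abs_div, div_le_iff₀ hd0]
    refine (abs_sub _ _).trans ?_
    rw [abs_mul, abs_mul]
    calc a * |D y| + e * |Ai y| ≤ a * (C * (|y| * r)) + e * (C * r) := by gcongr
      _ ≤ a * (C * ((q * d) * r)) + e * (C * r) * d := by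
          refine add_le_add (by gcongr) ?_
          exact le_mul_of_one_le_right (by positivity) hd1'
      _ = k * r * d := by rw [hk]; ring
  have hKd : |KAi x y / (x - y)| ≤ k * r := by
    rw [abs_div, div_le_iff₀ hd0]
    exact hK.trans (le_mul_of_one_le_right (by positivity) hd1')
  have hKd' : |KAi y x / (y - x)| ≤ k * r := by
    rw [abs_div, hd', hKs, div_le_iff₀ hd0]
    exact hK.trans (le_mul_of_one_le_right (by positivity) hd1')
  have hG1 : ∀ z, |1 - G z| ≤ 1 + M := fun z =>
    (abs_sub _ _).trans (by rw [abs_one]; linarith [hG z])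
  have hhalf : |(1/2 : ℝ)| = 1 / 2 := abs_of_pos (by norm_num)
  have bJ1 : |J1 x y| ≤ j1 := by
    rw [J1_eq]
    refine (abs_add_le _ _).trans ?_
    rw [abs_mul, abs_mul, hhalf, hj1]
    gcongr
    · exact hK.trans (mul_le_of_le_one_right hk0 hr1)
    · exact hG1 y
  have bJ2 : |J1 y x| ≤ j2 * r := by
    rw [J1_eq, hKs]
    refine (abs_add_le _ _).trans ?_
    rw [abs_mul, abs_mul, hhalf]
    calc _ ≤ k * r + 1 / 2 * (C * r) * (1 + M) := by gcongr; exact hG1 x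
      _ = j2 * r := by rw [hj2]; ring
  have bD1 : |deriv (fun v => J1 x v) y| ≤ d1 * r := by
    rw [deriv_J1 x y hne]
    have h1 : |(Ai x * (y * Ai y) - D x * D y) / (x - y)| ≤ C * ((a + e) * q) * r := by
      rw [abs_div, div_le_iff₀ hd0]
      refine (abs_sub _ _).trans ?_
      rw [abs_mul, abs_mul, abs_mul]
      calc a * (|y| * |Ai y|) + e * |D y| ≤ a * (|y| * (C * r)) + e * (C * (|y| * r)) := by gcongr
        _ = C * (a + e) * r * |y| := by ring
        _ ≤ C * (a + e) * r * (q * d) := by gcongr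
        _ = _ := by ring
    have h3 : |1 / 2 * Ai x * Ai y| ≤ 1 / 2 * a * C * r := by
      rw [abs_mul, abs_mul, hhalf]
      calc _ ≤ 1 / 2 * a * (C * r) := by gcongr
        _ = _ := by ring
    refine (abs_add_three _ _ _).trans ?_
    calc _ ≤ C * ((a + e) * q) * r + k * r + 1 / 2 * a * C * r := by gcongr
      _ = d1 * r := by rw [hd1]; ring
  have bD2 : |deriv (fun v => J1 y v) x| ≤ d2 * r := by
    rw [deriv_J1 y x hne.symm]
    have h1 : |(Ai y * (x * Ai x) - D y * D x) / (y - x)| ≤ C * (|x| * a + e * q) * r := by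
      rw [abs_div, hd', div_le_iff₀ hd0]
      refine (abs_sub _ _).trans ?_
      rw [abs_mul, abs_mul, abs_mul]
      calc |Ai y| * (|x| * a) + |D y| * e ≤ (C * r) * (|x| * a) + (C * (|y| * r)) * e := by gcongr
        _ ≤ (C * r) * (|x| * a) * d + (C * ((q * d) * r)) * e := by
          refine add_le_add ?_ (by gcongr)
          exact le_mul_of_one_le_right (by positivity) hd1'
        _ = _ := by ring
    have h3 : |1 / 2 * Ai y * Ai x| ≤ 1 / 2 * a * C * r := by
      rw [abs_mul, abs_mul, hhalf]
      calc _ ≤ 1 / 2 * (C * r) * a := by gcongr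
        _ = _ := by ring
    refine (abs_add_three _ _ _).trans ?_
    calc _ ≤ C * (|x| * a + e * q) * r + k * r + 1 / 2 * a * C * r := by gcongr
      _ = d2 * r := by rw [hd2]; ring
  clear_value j1 j2 d1 d2 r
  have hfin : ∀ z : ℝ, z ≤ (j1 * j2 + d1 * B + d2 * B) * r →
      z ≤ (j1 * j2 + d1 * B + d2 * B + 1) * (|y| ^ (-(3:ℝ)/2) + r) := by
    intro z hz
    refine hz.trans (mul_le_mul (by linarith) (by linarith) hr0.le (by positivity))
  constructor
  · apply hfin
    unfold L1
    refine (abs_sub _ _).trans ?_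
    rw [abs_mul, abs_mul]
    calc _ ≤ j1 * (j2 * r) + (d1 * r) * B := by gcongr
      _ = (j1 * j2 + d1 * B + 0) * r := by ring
      _ ≤ _ := by gcongr; positivity
  · apply hfin
    unfold L1
    refine (abs_sub _ _).trans ?_
    rw [abs_mul, abs_mul]
    calc _ ≤ (j2 * r) * j1 + (d2 * r) * B := by gcongr
      _ = (j1 * j2 + 0 + d2 * B) * r := by ring
      _ ≤ _ := by gcongr; positivity

end AiryAux

/-- decay of the scalar part `L₁` of the quaternion product of Airy₁ kernels. -/
theorem L1_decay (x : ℝ) :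
    ∃ C : ℝ, 0 < C ∧ ∀ y : ℝ, |x| + 1 ≤ |y| →
      |L1 x y| ≤ C * (|y| ^ (-(3:ℝ)/2) + |y| ^ (-(1:ℝ)/4)) ∧
      |L1 y x| ≤ C * (|y| ^ (-(3:ℝ)/2) + |y| ^ (-(1:ℝ)/4)) := by
  exact AiryAux.main x
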